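/- Let A be a commutative ring with 2 ∈ A^×, let (R,*) be an involutive A-algebra, and let (D,P) be a weak symplectic determinant law of dimension 2d on (R,*). Then for every commutative A-algebra B and all commuting elements x, y ∈ R^+ ⊗_A B, the product xy lies in R^+ ⊗_A B and P_B(xy) = P_B(x)·P_B(y). -/

import Mathlib

/-!
STATEMENT 3: for a weak symplectic determinant law `(D, P)` of dimension `2d` and commuting
symmetric elements `x, y` of `R⁺ ⊗ B`, the product `x·y` is again symmetric (i.e. lies in
the image of `R⁺ ⊗ B`) and `P_B(x y) = P_B(x) · P_B(y)`.
-/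

open scoped TensorProduct

universe u

namespace SympDet

/-! ### Polynomial laws valued in the base ring -/

variable (A : Type u) [CommRing A]

/-- An `A`-polynomial law on the `A`-module `M` with values in `A`: a family of maps
`M ⊗[A] B → B` (written `B ⊗[A] M → B`), one for each commutative `A`-algebra `B`,
natural in `B`. -/
structure PolyLaw (M : Type u) [AddCommGroup M] [Module A M] : Type (u + 1) where
  toFun : ∀ (B : Type u) [CommRing B] [Algebra A B], B ⊗[A] M → B
  natural : ∀ (B B' : Type u) [CommRing B] [Algebra A B] [CommRing B'] [Algebra A B']
      (f : B →ₐ[A] B') (x : B ⊗[A] M),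
      f (toFun B x) = toFun B' (LinearMap.rTensor M f.toLinearMap x)

variable {A}

/-- Homogeneity of degree `n` of a polynomial law. -/
def PolyLaw.IsHomog {M : Type u} [AddCommGroup M] [Module A M] (P : PolyLaw A M) (n : ℕ) : Prop :=
  ∀ (B : Type u) [CommRing B] [Algebra A B] (b : B) (x : B ⊗[A] M),
    P.toFun B (b • x) = b ^ n * P.toFun B x

/-- The kernel of a polynomial law. -/
def PolyLaw.lawKer {M : Type u} [AddCommGroup M] [Module A M] (P : PolyLaw A M) : Set M :=
  {m | ∀ (B : Type u) [CommRing B] [Algebra A B] (b : B) (y : B ⊗[A] M),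
    P.toFun B (b ⊗ₜ[A] m + y) = P.toFun B y}

/-- Multiplicativity of a polynomial law on an `A`-algebra `R`. -/
def PolyLaw.IsMult {R : Type u} [Ring R] [Algebra A R] (D : PolyLaw A R) : Prop :=
  ∀ (B : Type u) [CommRing B] [Algebra A B],
    D.toFun B 1 = 1 ∧ ∀ x y : B ⊗[A] R, D.toFun B (x * y) = D.toFun B x * D.toFun B y

/-! ### Involutive algebras -/

variable (A) in
/-- An involutive `A`-algebra structure: an `A`-linear involutive anti-automorphism. -/
structure InvAlg (R : Type u) [Ring R] [Algebra A R] : Type u where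
  star : R →ₗ[A] R
  star_one : star 1 = 1
  star_mul : ∀ x y : R, star (x * y) = star y * star x
  star_star : ∀ x : R, star (star x) = x

variable {R : Type u} [Ring R] [Algebra A R]

/-- The submodule of symmetric elements `R⁺`. -/
def InvAlg.plus (s : InvAlg A R) : Submodule A R :=
  LinearMap.ker (s.star - LinearMap.id)

theorem InvAlg.one_mem_plus (s : InvAlg A R) : (1 : R) ∈ s.plus := by
  simp [InvAlg.plus, LinearMap.mem_ker, LinearMap.sub_apply, s.star_one]

/-- `1` as an element of `R⁺`. -/
def InvAlg.onePlus (s : InvAlg A R) : s.plus := ⟨1, s.one_mem_plus⟩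

/-- The inclusion `B ⊗[A] R⁺ → B ⊗[A] R`. -/
noncomputable def InvAlg.incl (s : InvAlg A R) (B : Type u) [CommRing B] [Algebra A B] :
    B ⊗[A] ↥s.plus →ₗ[A] B ⊗[A] R :=
  LinearMap.lTensor B s.plus.subtype

/-- A weak symplectic determinant law of dimension `2d`. -/
structure IsWeakSympDet (s : InvAlg A R) (d : ℕ) (D : PolyLaw A R) (P : PolyLaw A ↥s.plus) :
    Prop where
  mult : D.IsMult
  homog : D.IsHomog (2 * d)
  starInv : ∀ (B : Type u) [CommRing B] [Algebra A B] (x : B ⊗[A] R),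
      D.toFun B (LinearMap.lTensor B s.star x) = D.toFun B x
  homogP : P.IsHomog d
  sq : ∀ (B : Type u) [CommRing B] [Algebra A B] (x : B ⊗[A] ↥s.plus),
      P.toFun B x ^ 2 = D.toFun B (s.incl B x)
  one : P.toFun A ((1 : A) ⊗ₜ[A] s.onePlus) = 1

/-! ### Characteristic polynomials and the Cayley-Hamilton ideal -/

/-- The characteristic polynomial `χ^P(x, t) = P_{B[t]}(t·e - x)` of a polynomial law,
relative to a marked element `e` (the unit). -/
noncomputable def chPoly {M : Type u} [AddCommGroup M] [Module A M] (P : PolyLaw A M) (e : M)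
    (B : Type u) [CommRing B] [Algebra A B] (x : B ⊗[A] M) : Polynomial B :=
  P.toFun (Polynomial B)
    ((Polynomial.X : Polynomial B) ⊗ₜ[A] e -
      LinearMap.rTensor M (IsScalarTower.toAlgHom A B (Polynomial B)).toLinearMap x)

/-- The coefficient `(-1)^i Λ_i` of `t^(n-i)` in the characteristic polynomial, with the
convention that it vanishes for `i > n`. -/
noncomputable def chCoeff {M : Type u} [AddCommGroup M] [Module A M] (P : PolyLaw A M) (e : M)
    (n i : ℕ) (B : Type u) [CommRing B] [Algebra A B] (x : B ⊗[A] M) : B :=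
  if i ≤ n then (-1 : B) ^ i * (chPoly P e B x).coeff (n - i) else 0

/-- `χ^P(x, x)`: the characteristic polynomial of `x ∈ (B ⊗ R)⁺` evaluated at `x` itself. -/
noncomputable def chEval (s : InvAlg A R) (P : PolyLaw A ↥s.plus) (B : Type u) [CommRing B]
    [Algebra A B] (x : B ⊗[A] ↥s.plus) : B ⊗[A] R :=
  Polynomial.aeval (s.incl B x) (chPoly P s.onePlus B x)

/-- The `A`-linear coefficient extraction map on multivariate polynomials. -/
noncomputable def mvLcoeff {n : ℕ} (α : Fin n →₀ ℕ) : MvPolynomial (Fin n) A →ₗ[A] A where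
  toFun p := MvPolynomial.coeff α p
  map_add' p q := MvPolynomial.coeff_add α p q
  map_smul' c p := MvPolynomial.coeff_smul α c p

/-- Extracting the coefficient of the monomial `t^α` from an element of `R[t_1,…,t_n]`. -/
noncomputable def tensorCoeff {n : ℕ} (α : Fin n →₀ ℕ) :
    (MvPolynomial (Fin n) A) ⊗[A] R →ₗ[A] R :=
  (TensorProduct.lid A R).toLinearMap ∘ₗ LinearMap.rTensor R (mvLcoeff α)

/-- The generators `χ^P_α(r_1, …, r_n)` of the Cayley–Hamilton ideal of `P`:
the multihomogeneous coefficients of `χ^P(t_1 r_1 + ⋯ + t_n r_n, t_1 r_1 + ⋯ + t_n r_n)`. -/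
def chGen (s : InvAlg A R) (P : PolyLaw A ↥s.plus) : Set R :=
  {y | ∃ (n : ℕ) (r : Fin n → ↥s.plus) (α : Fin n →₀ ℕ),
    y = tensorCoeff α
      (chEval s P (MvPolynomial (Fin n) A)
        (∑ i : Fin n, (MvPolynomial.X i : MvPolynomial (Fin n) A) ⊗ₜ[A] r i))}

/-- The Cayley–Hamilton ideal `CH(P)`: the two-sided ideal generated by the
multihomogeneous coefficients of the characteristic polynomials. -/
def chIdeal (s : InvAlg A R) (P : PolyLaw A ↥s.plus) : TwoSidedIdeal R :=
  TwoSidedIdeal.span (chGen s P)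

/-- A symplectic determinant law of dimension `2d`: a weak symplectic determinant law
such that `CH(P) ⊆ ker(D)`. -/
def IsSympDet (s : InvAlg A R) (d : ℕ) (D : PolyLaw A R) (P : PolyLaw A ↥s.plus) : Prop :=
  IsWeakSympDet s d D P ∧ ∀ y ∈ chIdeal s P, y ∈ D.lawKer

/-- A symplectic Cayley–Hamilton algebra of degree `2d`: a symplectic determinant law
such that `χ^P(r, r) = 0` for all symmetric `r` over all base extensions. -/
def IsSympCH (s : InvAlg A R) (d : ℕ) (D : PolyLaw A R) (P : PolyLaw A ↥s.plus) : Prop :=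
  IsSympDet s d D P ∧
    ∀ (B : Type u) [CommRing B] [Algebra A B] (x : B ⊗[A] ↥s.plus), chEval s P B x = 0

end SympDet

/-!
Since `P_B(xy)² = D_B(xy) = D_B(x) D_B(y) = (P_B(x) P_B(y))²`, only a sign-like ambiguity
remains, and deforming to the unit removes it: over `B[X]`, replace `x` and `y` by
`(1 - X) + X x` and `(1 - X) + X y`. Their product is again in the image of `B[X] ⊗ R⁺`, so `P` of
the product and the product of the `P`s are polynomials `F`, `G` with `F² = G²` and
`F(0) = G(0) = 1`. As `F + G` has value `2` at `0`, it is not a zero divisor, hence `F = G`; now set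
`X = 1`.
-/

namespace SympDet

open Polynomial nonZeroDivisors AffineMap

theorem eq_of_sq_eq_sq_of_eval_add_mem_nonZeroDivisors {B : Type*} [CommRing B] {F G : B[X]}
    {c : B} (hc : F.eval c + G.eval c ∈ B⁰) (h : F ^ 2 = G ^ 2) : F = G := by
  -- McCoy: a zero divisor in `B[X]` is killed by a nonzero constant, which evaluation detects.
  have hadd : F + G ∈ B[X]⁰ := by
    rw [Polynomial.mem_nonZeroDivisors_iff]
    intro a ha
    have hac : a * (F.eval c + G.eval c) = 0 := by
      simpa only [eval_smul, eval_add, eval_zero, smul_eq_mul] using congrArg (eval c) ha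
    exact (mul_right_mem_nonZeroDivisors_eq_zero_iff hc).mp hac
  have hmul : (F - G) * (F + G) = 0 := by linear_combination h
  exact sub_eq_zero.mp ((mul_right_mem_nonZeroDivisors_eq_zero_iff hadd).mp hmul)

section LineMap

variable {S T : Type*} [CommRing S] [Ring T] [Algebra S T]

theorem lineMap_mul (a b c : T) (t : S) :
    lineMap a b t * c = lineMap (a * c) (b * c) t :=
  (LinearMap.mulRight S c).toAffineMap.apply_lineMap a b t

theorem mul_lineMap (a b c : T) (t : S) :
    c * lineMap a b t = lineMap (c * a) (c * b) t :=
  (LinearMap.mulLeft S c).toAffineMap.apply_lineMap a b t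

theorem lineMap_one_mul_lineMap_one (a b : T) (t : S) :
    lineMap 1 a t * lineMap 1 b t = lineMap (lineMap 1 b t) (lineMap a (a * b) t) t := by
  rw [lineMap_mul, one_mul, mul_lineMap, mul_one]

end LineMap

section TensorPolynomial

variable {A : Type*} [CommRing A] {M N : Type*} [AddCommGroup M] [Module A M] [AddCommGroup N]
  [Module A N] {R : Type*} [Ring R] [Algebra A R] {B : Type*} [CommRing B] [Algebra A B]

theorem lTensor_lineMap (f : M →ₗ[A] N) (x y : B ⊗[A] M) (b : B) :
    f.lTensor B (lineMap x y b) = lineMap (f.lTensor B x) (f.lTensor B y) b :=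
  (f.baseChange B).toAffineMap.apply_lineMap x y b

/-- The map `B ⊗ M → B[X] ⊗ M` regarding elements as polynomials of degree `0` with
coefficients in `M`. -/
noncomputable def constTensor : B ⊗[A] M →ₗ[A] B[X] ⊗[A] M :=
  (IsScalarTower.toAlgHom A B B[X]).toLinearMap.rTensor M

/-- The specialization `B[X] ⊗ M → B ⊗ M` at `X = c`. -/
noncomputable def evalTensor (c : B) : B[X] ⊗[A] M →ₗ[A] B ⊗[A] M :=
  ((aeval c : B[X] →ₐ[B] B).restrictScalars A).toLinearMap.rTensor M

theorem evalTensor_constTensor (c : B) (x : B ⊗[A] M) : evalTensor c (constTensor x) = x := by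
  induction x with
  | zero => simp only [map_zero]
  | tmul b m => simp [evalTensor, constTensor]
  | add x y hx hy => simp only [map_add, hx, hy]

theorem evalTensor_smul (c : B) (p : B[X]) (x : B[X] ⊗[A] M) :
    evalTensor c (p • x) = p.eval c • evalTensor c x := by
  induction x with
  | zero => simp only [smul_zero, map_zero]
  | tmul q m => simp [evalTensor, TensorProduct.smul_tmul', coe_aeval_eq_eval]
  | add x y hx hy => simp only [smul_add, map_add, hx, hy]

theorem evalTensor_lineMap (c : B) (x y : B[X] ⊗[A] M) (p : B[X]) :
    evalTensor c (lineMap x y p) = lineMap (evalTensor c x) (evalTensor c y) (p.eval c) := by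
  simp only [lineMap_apply_module, map_add, evalTensor_smul, eval_sub, eval_one]

theorem lTensor_constTensor (f : M →ₗ[A] N) (x : B ⊗[A] M) :
    f.lTensor B[X] (constTensor x) = constTensor (f.lTensor B x) := by
  simp only [constTensor, ← LinearMap.comp_apply, LinearMap.lTensor_comp_rTensor,
    LinearMap.rTensor_comp_lTensor]

theorem constTensor_one : constTensor (1 : B ⊗[A] R) = 1 :=
  map_one (Algebra.TensorProduct.map (IsScalarTower.toAlgHom A B B[X]) (AlgHom.id A R))

theorem constTensor_mul (x y : B ⊗[A] R) :
    constTensor (x * y) = constTensor x * constTensor y :=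
  map_mul (Algebra.TensorProduct.map (IsScalarTower.toAlgHom A B B[X]) (AlgHom.id A R)) x y

end TensorPolynomial

variable {A : Type u} [CommRing A] {R : Type u} [Ring R] [Algebra A R]

namespace PolyLaw

variable {M : Type u} [AddCommGroup M] [Module A M]

theorem eval_toFun (P : PolyLaw A M) {B : Type u} [CommRing B] [Algebra A B] (c : B)
    (w : B[X] ⊗[A] M) : (P.toFun B[X] w).eval c = P.toFun B (evalTensor c w) := by
  rw [← coe_aeval_eq_eval]
  exact P.natural B[X] B ((aeval c : B[X] →ₐ[B] B).restrictScalars A) w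

theorem toFun_one_tmul_eq_one (P : PolyLaw A M) {e : M} (he : P.toFun A (1 ⊗ₜ e) = 1)
    (B : Type u) [CommRing B] [Algebra A B] : P.toFun B (1 ⊗ₜ e) = 1 := by
  simpa [he] using (P.natural A B (Algebra.ofId A B) (1 ⊗ₜ e)).symm

theorem IsMult.toFun_eq_mul_of_sq_eq {D : PolyLaw A R} (hD : D.IsMult) (f : M →ₗ[A] R)
    {P : PolyLaw A M}
    (hsq : ∀ (B : Type u) [CommRing B] [Algebra A B] (x : B ⊗[A] M),
      P.toFun B x ^ 2 = D.toFun B (f.lTensor B x))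
    {B : Type u} [CommRing B] [Algebra A B] (h2 : (2 : B) ∈ B⁰) {e x y z : B ⊗[A] M}
    (he : f.lTensor B e = 1) (hPe : P.toFun B e = 1)
    (hz : f.lTensor B z = f.lTensor B x * f.lTensor B y) :
    P.toFun B z = P.toFun B x * P.toFun B y := by
  let line (v w : B[X] ⊗[A] M) : B[X] ⊗[A] M := lineMap v w (X : B[X])
  let xₜ := line (constTensor e) (constTensor x)
  let yₜ := line (constTensor e) (constTensor y)
  let zₜ := line yₜ (line (constTensor x) (constTensor z))
  have eval_zero_line (v w) : evalTensor 0 (line v w) = evalTensor 0 v := by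
    rw [evalTensor_lineMap, eval_X, lineMap_apply_zero]
  have eval_one_line (v w) : evalTensor 1 (line v w) = evalTensor 1 w := by
    rw [evalTensor_lineMap, eval_X, lineMap_apply_one]
  have hzₜ : f.lTensor B[X] zₜ = f.lTensor B[X] xₜ * f.lTensor B[X] yₜ := by
    simp only [xₜ, yₜ, zₜ, line, lTensor_lineMap, lTensor_constTensor, he, hz, constTensor_one,
      constTensor_mul, lineMap_one_mul_lineMap_one]
  have hP : P.toFun B[X] zₜ = P.toFun B[X] xₜ * P.toFun B[X] yₜ := by
    refine eq_of_sq_eq_sq_of_eval_add_mem_nonZeroDivisors (c := 0) ?_ ?_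
    · simpa only [eval_mul, eval_toFun, xₜ, yₜ, zₜ, eval_zero_line, evalTensor_constTensor, hPe,
        mul_one, one_add_one_eq_two] using h2
    · rw [mul_pow, hsq, hsq, hsq, hzₜ, (hD B[X]).2]
  simpa only [eval_mul, eval_toFun, xₜ, yₜ, zₜ, eval_one_line, evalTensor_constTensor]
    using congrArg (eval 1) hP

end PolyLaw

namespace InvAlg

variable (s : InvAlg A R)

theorem mem_plus_iff {r : R} : r ∈ s.plus ↔ s.star r = r := by
  rw [plus, LinearMap.mem_ker, LinearMap.sub_apply, LinearMap.id_apply, sub_eq_zero]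

variable {B : Type u} [CommRing B] [Algebra A B]

theorem incl_one_tmul_onePlus : s.incl B (1 ⊗ₜ s.onePlus) = 1 := rfl

theorem lTensor_star_incl (x : B ⊗[A] s.plus) :
    s.star.lTensor B (s.incl B x) = s.incl B x := by
  have hstar : s.star ∘ₗ s.plus.subtype = s.plus.subtype :=
    LinearMap.ext fun r => s.mem_plus_iff.mp r.2
  rw [incl, ← LinearMap.lTensor_comp_apply, hstar]

theorem lTensor_star_mul (x y : B ⊗[A] R) :
    s.star.lTensor B (x * y) = s.star.lTensor B y * s.star.lTensor B x := by
  induction x with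
  | zero => simp only [zero_mul, mul_zero, map_zero]
  | add x x' hx hx' => simp only [map_add, add_mul, mul_add, hx, hx']
  | tmul b r =>
    induction y with
    | zero => simp only [zero_mul, mul_zero, map_zero]
    | add y y' hy hy' => simp only [map_add, add_mul, mul_add, hy, hy']
    | tmul c t => simp [s.star_mul, mul_comm]

theorem add_lTensor_star_mem_range_incl (w : B ⊗[A] R) :
    w + s.star.lTensor B w ∈ LinearMap.range (s.incl B) := by
  have hmem (r : R) : (LinearMap.id + s.star : R →ₗ[A] R) r ∈ s.plus := by
    simp only [mem_plus_iff, LinearMap.add_apply, LinearMap.id_apply, map_add, s.star_star,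
      add_comm]
  refine ⟨(LinearMap.codRestrict s.plus _ hmem).lTensor B w, ?_⟩
  rw [incl, ← LinearMap.lTensor_comp_apply, LinearMap.subtype_comp_codRestrict,
    LinearMap.lTensor_add, LinearMap.lTensor_id, LinearMap.add_apply, LinearMap.id_apply]

theorem mem_range_incl_iff (h2 : IsUnit (2 : B)) {w : B ⊗[A] R} :
    w ∈ LinearMap.range (s.incl B) ↔ s.star.lTensor B w = w := by
  constructor
  · rintro ⟨x, rfl⟩
    exact s.lTensor_star_incl x
  · intro hw
    obtain ⟨c, hc⟩ := h2.exists_left_inv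
    obtain ⟨z, hz⟩ := s.add_lTensor_star_mem_range_incl w
    refine ⟨c • z, ?_⟩
    calc s.incl B (c • z) = c • s.incl B z := (s.plus.subtype.baseChange B).map_smul c z
      _ = c • (2 : B) • w := by rw [hz, hw, two_smul]
      _ = w := by rw [smul_smul, hc, one_smul]

theorem incl_mul_incl_mem_range_incl_iff (h2 : IsUnit (2 : B)) {x y : B ⊗[A] s.plus} :
    s.incl B x * s.incl B y ∈ LinearMap.range (s.incl B) ↔
      Commute (s.incl B x) (s.incl B y) := by
  rw [s.mem_range_incl_iff h2, lTensor_star_mul, lTensor_star_incl, lTensor_star_incl]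
  exact eq_comm

end InvAlg

end SympDet

open SympDet in
theorem stmt_3_general {A : Type u} [CommRing A] {R : Type u} [Ring R] [Algebra A R]
    (s : InvAlg A R) {D : PolyLaw A R} {P : PolyLaw A ↥s.plus} (hD : D.IsMult)
    (hsq : ∀ (B : Type u) [CommRing B] [Algebra A B] (x : B ⊗[A] ↥s.plus),
      P.toFun B x ^ 2 = D.toFun B (s.incl B x))
    (hone : P.toFun A ((1 : A) ⊗ₜ[A] s.onePlus) = 1)
    {B : Type u} [CommRing B] [Algebra A B] (h2 : IsUnit (2 : B)) {x y : B ⊗[A] ↥s.plus}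
    (hxy : Commute (s.incl B x) (s.incl B y)) :
    (∃ z : B ⊗[A] ↥s.plus, s.incl B z = s.incl B x * s.incl B y) ∧
      ∀ z : B ⊗[A] ↥s.plus, s.incl B z = s.incl B x * s.incl B y →
        P.toFun B z = P.toFun B x * P.toFun B y :=
  ⟨(s.incl_mul_incl_mem_range_incl_iff h2).mpr hxy, fun _ hz =>
    hD.toFun_eq_mul_of_sq_eq s.plus.subtype hsq h2.mem_nonZeroDivisors s.incl_one_tmul_onePlus
      (P.toFun_one_tmul_eq_one hone B) hz⟩

open SympDet in
theorem stmt_3 {A : Type u} [CommRing A] {R : Type u} [Ring R] [Algebra A R]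
    (h2 : IsUnit (2 : A)) (s : InvAlg A R) (d : ℕ) (D : PolyLaw A R) (P : PolyLaw A ↥s.plus)
    (h : IsWeakSympDet s d D P) :
    ∀ (B : Type u) [CommRing B] [Algebra A B] (x y : B ⊗[A] ↥s.plus),
      s.incl B x * s.incl B y = s.incl B y * s.incl B x →
        (∃ z : B ⊗[A] ↥s.plus, s.incl B z = s.incl B x * s.incl B y) ∧
          ∀ z : B ⊗[A] ↥s.plus, s.incl B z = s.incl B x * s.incl B y →
            P.toFun B z = P.toFun B x * P.toFun B y := by
  intro B _ _ x y hxy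
  exact stmt_3_general s h.mult h.sq h.one (map_ofNat (algebraMap A B) 2 ▸ h2.map _) hxy
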